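/- Let q ∈ ℂ with 0 < |q| < 1, let A : ℤ → ℂ be any sequence, and let b, t, x ∈ ℂ with b·t ≠ q^{-m} for every m ∈ ℕ (so that (bt;q)_j ≠ 0 for all j). Assume the family (i,j) ↦ A_{i-j} q^{ij} x^j (bq^{-i};q)_j (t;q)_j / ((q;q)_i (q;q)_j (bt;q)_j) indexed by ℕ×ℕ is absolutely summable, and the family (i,j,k) ↦ A_{i-j} (-1)^k q^{k(k-1)/2} x^{j+k} (tq^{i+k};q)_j (b;q)_j / ((q;q)_i (q;q)_j (q;q)_k (bt;q)_j) indexed by ℕ×ℕ×ℕ is absolutely summable. Then ∑_{i,j≥0} A_{i-j} q^{ij} x^j (bq^{-i};q)_j (t;q)_j / ((q;q)_i (q;q)_j (bt;q)_j) = ∑_{i,j,k≥0} A_{i-j} (-1)^k q^{k(k-1)/2} x^{j+k} (tq^{i+k};q)_j (b;q)_j / ((q;q)_i (q;q)_j (q;q)_k (bt;q)_j). -/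

import Mathlib

/-- The finite q-shifted factorial `(a;q)_n = ∏_{k=0}^{n-1} (1 - a q^k)`. -/
noncomputable def qPoch (a q : ℂ) (n : ℕ) : ℂ := ∏ k ∈ Finset.range n, (1 - a * q ^ k)

/-- The infinite q-shifted factorial `(a;q)_∞ = ∏_{k=0}^{∞} (1 - a q^k)`. -/
noncomputable def qPochInf (a q : ℂ) : ℂ := ∏' k : ℕ, (1 - a * q ^ k)

/-!
Put `I = i + k` and `M = j + k` in the triple series. Then `A (i - j)` and `x ^ (j + k)` depend only
on `(I, M)`, and what remains is a terminating sum over `k ≤ min I M`, evaluated in closed form by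
the `q`-Pfaff–Saalschütz formula. That formula is proved with `q ^ I` replaced by an arbitrary
complex number `z`, where its terms become polynomials in `z` that vanish at `z = q ^ I` for
`k > I`, so that the sum may be taken over all `k ≤ M` and evaluated by induction on `M`.
-/

/-- The `q`-power `(z - a)_q^n = ∏_{k=0}^{n-1} (z - a q^k)`, a homogeneous form of the `q`-shifted
factorial `(a/z;q)_n` that is polynomial in `z`. -/
noncomputable def qPow (z a q : ℂ) (n : ℕ) : ℂ := ∏ k ∈ Finset.range n, (z - a * q ^ k)

/-- The summand of the `q`-Pfaff–Saalschütz sum over `k + j = M`, with the usual terminating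
parameter `q^(-I)` encoded as the inverse of a free variable `z`. -/
noncomputable def saalschutzTerm (z b t q : ℂ) (k j : ℕ) : ℂ :=
  qPow z 1 q k * qPoch (t * z) q j * qPoch b q j / (qPoch q q k * qPoch q q j * qPoch (b * t) q j)

theorem pow_succ_ne_one_of_norm_lt_one {R : Type*} [NormedDivisionRing R] {q : R}
    (hq : ‖q‖ < 1) (n : ℕ) : q ^ (n + 1) ≠ 1 := fun h ↦
  (pow_lt_one₀ (norm_nonneg q) hq n.succ_ne_zero).ne (by rw [← norm_pow, h, norm_one])

theorem qPoch_succ (a q : ℂ) (n : ℕ) : qPoch a q (n + 1) = qPoch a q n * (1 - a * q ^ n) :=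
  Finset.prod_range_succ _ _

theorem qPoch_self_succ (q : ℂ) (n : ℕ) :
    qPoch q q (n + 1) = qPoch q q n * (1 - q ^ (n + 1)) := by
  rw [qPoch_succ, pow_succ']

theorem qPoch_ne_zero {a q : ℂ} (ha : ∀ n, a * q ^ n ≠ 1) (n : ℕ) : qPoch a q n ≠ 0 :=
  Finset.prod_ne_zero_iff.mpr fun k _ ↦ sub_ne_zero.mpr (ha k).symm

theorem qPoch_self_ne_zero {q : ℂ} (hq : ∀ n, q ^ (n + 1) ≠ 1) (n : ℕ) : qPoch q q n ≠ 0 :=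
  qPoch_ne_zero (fun k ↦ pow_succ' q k ▸ hq k) n

theorem qPow_succ (z a q : ℂ) (n : ℕ) : qPow z a q (n + 1) = qPow z a q n * (z - a * q ^ n) :=
  Finset.prod_range_succ _ _

theorem qPow_mul_succ (z a q : ℂ) (n : ℕ) :
    qPow (q * z) a q (n + 1) = (q * z - a) * q ^ n * qPow z a q n := by
  have factor (k : ℕ) : q * z - a * q ^ (k + 1) = q * (z - a * q ^ k) := by ring
  simp only [qPow, Finset.prod_range_succ', factor, Finset.prod_mul_distrib, Finset.prod_const,
    Finset.card_range]
  ring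

theorem qPow_eq_pow_mul_qPoch {z : ℂ} (hz : z ≠ 0) (a q : ℂ) (n : ℕ) :
    qPow z a q n = z ^ n * qPoch (a * z⁻¹) q n := by
  have factor (k : ℕ) : z - a * q ^ k = z * (1 - a * z⁻¹ * q ^ k) := by field_simp
  simp only [qPow, qPoch, factor, Finset.prod_mul_distrib, Finset.prod_const, Finset.card_range]

theorem qPow_pow_one_mul_qPoch (q : ℂ) (i k : ℕ) :
    qPow (q ^ (i + k)) 1 q k * qPoch q q i =
      (-1) ^ k * q ^ (k * (k - 1) / 2) * qPoch q q (i + k) := by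
  induction k with
  | zero => simp [qPow]
  | succ k ih =>
    rw [← add_assoc, pow_succ' q (i + k), qPow_mul_succ, mul_assoc, ih, Nat.triangle_succ,
      qPoch_self_succ]
    ring

theorem qPow_pow_one_eq_zero (q : ℂ) {i k : ℕ} (hik : i < k) : qPow (q ^ i) 1 q k = 0 :=
  Finset.prod_eq_zero (Finset.mem_range.mpr hik) (by simp)

section Saalschutz

open Finset.HasAntidiagonal (antidiagonal mem_antidiagonal)

variable {b t q : ℂ}

theorem saalschutzTerm_succ_left {k : ℕ} (hk : q ^ (k + 1) ≠ 1) (z b t : ℂ) (j : ℕ) :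
    (1 - q ^ (k + 1)) * saalschutzTerm z b t q (k + 1) j =
      (z - q ^ k) * saalschutzTerm z b t q k j := by
  have hk' : 1 - q ^ (k + 1) ≠ 0 := sub_ne_zero.mpr hk.symm
  simp only [saalschutzTerm, qPow_succ, qPoch_self_succ, one_mul]
  field_simp

theorem saalschutzTerm_succ_right {j : ℕ} (hj : q ^ (j + 1) ≠ 1) (hbtj : b * t * q ^ j ≠ 1)
    (z : ℂ) (k : ℕ) :
    (1 - q ^ (j + 1)) * (1 - b * t * q ^ j) * saalschutzTerm z b t q k (j + 1) =
      (1 - t * z * q ^ j) * (1 - b * q ^ j) * saalschutzTerm z b t q k j := by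
  have hj' : 1 - q ^ (j + 1) ≠ 0 := sub_ne_zero.mpr hj.symm
  have hbtj' : 1 - b * t * q ^ j ≠ 0 := sub_ne_zero.mpr hbtj.symm
  simp only [saalschutzTerm, qPoch_succ b, qPoch_succ (t * z), qPoch_succ (b * t), qPoch_self_succ]
  -- `field_simp` would reorder the factors of `b * t * q ^ j` and no longer recognise `hbtj'`.
  generalize 1 - b * t * q ^ j = v at hbtj' ⊢
  field_simp

theorem sum_antidiagonal_saalschutzTerm_succ (hq : ∀ n, q ^ (n + 1) ≠ 1)
    (hbt : ∀ n, b * t * q ^ n ≠ 1) (z : ℂ) (M : ℕ) :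
    (1 - q ^ (M + 1)) * (1 - b * t * q ^ M) *
        ∑ p ∈ antidiagonal (M + 1), saalschutzTerm z b t q p.1 p.2 =
      (z - b * q ^ M) * (1 - t * q ^ M) *
        ∑ p ∈ antidiagonal M, saalschutzTerm z b t q p.1 p.2 := by
  let T (p : ℕ × ℕ) : ℂ := saalschutzTerm z b t q p.1 p.2
  let G (p : ℕ × ℕ) : ℂ := (1 - q ^ p.1) * (1 - b * t * q ^ (M + p.2)) * T p
  -- The first summand has the factor that lowers `k` in the term `(k, j + 1)`, the second one the
  -- factors that lower `j + 1`.
  have weight_split (k j : ℕ) : (1 - q ^ (k + j + 1)) * (1 - b * t * q ^ (k + j)) =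
      (1 - q ^ k) * (1 - b * t * q ^ (k + j + (j + 1))) +
        q ^ k * ((1 - q ^ (j + 1)) * (1 - b * t * q ^ j)) := by ring
  have lower_right : ∀ p ∈ antidiagonal M,
      (1 - q ^ (M + 1)) * (1 - b * t * q ^ M) * T (p.1, p.2 + 1) = G (p.1, p.2 + 1) +
        q ^ p.1 * (1 - t * z * q ^ p.2) * (1 - b * q ^ p.2) * T p := by
    rintro ⟨k, j⟩ hp
    obtain rfl := mem_antidiagonal.mp hp
    linear_combination T (k, j + 1) * weight_split k j +
      q ^ k * saalschutzTerm_succ_right (hq j) (hbt j) z k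
  have lower_left : ∀ p ∈ antidiagonal M,
      G (p.1 + 1, p.2) = (z - q ^ p.1) * (1 - b * t * q ^ (M + p.2)) * T p := fun p _ ↦ by
    linear_combination (1 - b * t * q ^ (M + p.2)) * saalschutzTerm_succ_left (hq p.1) z b t p.2
  calc (1 - q ^ (M + 1)) * (1 - b * t * q ^ M) * ∑ p ∈ antidiagonal (M + 1), T p
    _ = ∑ p ∈ antidiagonal (M + 1), G p + ∑ p ∈ antidiagonal M,
          q ^ p.1 * (1 - t * z * q ^ p.2) * (1 - b * q ^ p.2) * T p := by
      simp only [Finset.Nat.sum_antidiagonal_succ', mul_add, Finset.mul_sum]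
      rw [Finset.sum_congr rfl lower_right, Finset.sum_add_distrib, add_assoc]
      simp only [G, add_zero]
    _ = ∑ p ∈ antidiagonal M, (z - q ^ p.1) * (1 - b * t * q ^ (M + p.2)) * T p +
          ∑ p ∈ antidiagonal M,
            q ^ p.1 * (1 - t * z * q ^ p.2) * (1 - b * q ^ p.2) * T p := by
      rw [Finset.Nat.sum_antidiagonal_succ, Finset.sum_congr rfl lower_left]
      simp only [G, pow_zero, sub_self, zero_mul, zero_add]
    _ = (z - b * q ^ M) * (1 - t * q ^ M) * ∑ p ∈ antidiagonal M, T p := by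
      rw [← Finset.sum_add_distrib, Finset.mul_sum]
      refine Finset.sum_congr rfl fun p hp ↦ ?_
      rw [← mem_antidiagonal.mp hp]
      ring

theorem sum_antidiagonal_saalschutzTerm (hq : ∀ n, q ^ (n + 1) ≠ 1)
    (hbt : ∀ n, b * t * q ^ n ≠ 1) (z : ℂ) (M : ℕ) :
    ∑ p ∈ antidiagonal M, saalschutzTerm z b t q p.1 p.2 =
      qPow z b q M * qPoch t q M / (qPoch q q M * qPoch (b * t) q M) := by
  induction M with
  | zero => simp [saalschutzTerm, qPow, qPoch]
  | succ M ih =>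
    have hM : 1 - q ^ (M + 1) ≠ 0 := sub_ne_zero.mpr (hq M).symm
    have hbtM : 1 - b * t * q ^ M ≠ 0 := sub_ne_zero.mpr (hbt M).symm
    apply mul_left_cancel₀ (mul_ne_zero hM hbtM)
    rw [sum_antidiagonal_saalschutzTerm_succ hq hbt, ih, qPow_succ, qPoch_succ t,
      qPoch_succ (b * t), qPoch_self_succ]
    generalize 1 - b * t * q ^ M = v at hbtM ⊢
    field_simp

theorem saalschutzTerm_pow_div (hq : ∀ n, q ^ (n + 1) ≠ 1) (b t : ℂ) {I k : ℕ} (hk : k ≤ I)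
    (j : ℕ) :
    saalschutzTerm (q ^ I) b t q k j / qPoch q q I =
      (-1) ^ k * q ^ (k * (k - 1) / 2) * qPoch (t * q ^ I) q j * qPoch b q j /
        (qPoch q q (I - k) * qPoch q q j * qPoch q q k * qPoch (b * t) q j) := by
  obtain ⟨i, rfl⟩ := Nat.exists_eq_add_of_le' hk
  have hqI := qPoch_self_ne_zero hq (i + k)
  have hqi := qPoch_self_ne_zero hq i
  have hqPow : qPow (q ^ (i + k)) 1 q k =
      (-1) ^ k * q ^ (k * (k - 1) / 2) * qPoch q q (i + k) / qPoch q q i :=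
    eq_div_of_mul_eq hqi (qPow_pow_one_mul_qPoch q i k)
  rw [Nat.add_sub_cancel, saalschutzTerm, hqPow]
  field_simp

theorem q_pfaff_saalschutz (hq0 : q ≠ 0) (hq : ∀ n, q ^ (n + 1) ≠ 1)
    (hbt : ∀ n, b * t * q ^ n ≠ 1) (I M : ℕ) :
    ∑ k ∈ Finset.range (min I M + 1), (-1) ^ k * q ^ (k * (k - 1) / 2) *
        qPoch (t * q ^ I) q (M - k) * qPoch b q (M - k) /
        (qPoch q q (I - k) * qPoch q q (M - k) * qPoch q q k * qPoch (b * t) q (M - k)) =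
      q ^ (I * M) * qPoch (b * q ^ (-(I : ℤ))) q M * qPoch t q M /
        (qPoch q q I * qPoch q q M * qPoch (b * t) q M) := by
  have vanish : ∀ k ∈ Finset.range (M + 1), k ∉ Finset.range (min I M + 1) →
      saalschutzTerm (q ^ I) b t q k (M - k) = 0 := fun k hkM hk ↦ by
    have hIk : I < k := by grind
    simp only [saalschutzTerm, qPow_pow_one_eq_zero q hIk, zero_mul, zero_div]
  calc _ = ∑ k ∈ Finset.range (min I M + 1),
          saalschutzTerm (q ^ I) b t q k (M - k) / qPoch q q I :=
        Finset.sum_congr rfl fun k hk ↦ (saalschutzTerm_pow_div hq b t (by grind) _).symm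
    _ = (∑ p ∈ antidiagonal M, saalschutzTerm (q ^ I) b t q p.1 p.2) / qPoch q q I := by
      rw [← Finset.sum_div, Finset.Nat.sum_antidiagonal_eq_sum_range_succ_mk,
        Finset.sum_subset (Finset.range_mono (by omega)) vanish]
    _ = _ := by
      rw [sum_antidiagonal_saalschutzTerm hq hbt, qPow_eq_pow_mul_qPoch (pow_ne_zero I hq0),
        ← pow_mul, zpow_neg, zpow_natCast, div_div]
      ring

end Saalschutz

theorem tsum_eq_tsum_sum_range_min {E : Type*} [AddCommMonoid E] [TopologicalSpace E]
    [ContinuousAdd E] [T3Space E] {f : ℕ × ℕ × ℕ → E} (hf : Summable f) :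
    ∑' p, f p = ∑' p : ℕ × ℕ, ∑ k ∈ Finset.range (min p.1 p.2 + 1), f (p.1 - k, p.2 - k, k) := by
  let diag (p : ℕ × ℕ × ℕ) : ℕ × ℕ := (p.1 + p.2.2, p.2.1 + p.2.2)
  refine (((Equiv.sigmaFiberEquiv diag).hasSum_iff.mpr hf.hasSum).sigma fun p ↦ ?_).tsum_eq.symm
  let fiberPoint (k : ℕ) : ℕ × ℕ × ℕ := (p.1 - k, p.2 - k, k)
  let fiber : Finset (ℕ × ℕ × ℕ) := (Finset.range (min p.1 p.2 + 1)).image fiberPoint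
  have fiberPoint_injective : Function.Injective fiberPoint := fun _ _ h ↦
    congrArg (fun r ↦ r.2.2) h
  have coe_fiber : (fiber : Set (ℕ × ℕ × ℕ)) = diag ⁻¹' {p} := by
    ext r
    simp only [fiber, fiberPoint, diag, Finset.mem_coe, Finset.mem_image, Finset.mem_range,
      Set.mem_preimage, Set.mem_singleton_iff, Prod.ext_iff]
    exact ⟨by rintro ⟨k, hk, h⟩; omega, fun h ↦ ⟨r.2.2, by omega⟩⟩
  have hasSum_fiber : HasSum (fun r : diag ⁻¹' {p} ↦ f r) (∑ r ∈ fiber, f r) :=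
    coe_fiber ▸ fiber.hasSum f
  rwa [Finset.sum_image fiberPoint_injective.injOn] at hasSum_fiber

theorem stmt0_general (q : ℂ) (hq0 : q ≠ 0) (hq : ∀ n : ℕ, q ^ (n + 1) ≠ 1)
    (A : ℤ → ℂ) (b t x : ℂ)
    (hbt : ∀ m : ℕ, b * t ≠ q ^ (-(m : ℤ)))
    (h : Summable (fun p : ℕ × ℕ × ℕ => A ((p.1 : ℤ) - (p.2.1 : ℤ)) * (-1 : ℂ) ^ p.2.2 *
      q ^ (p.2.2 * (p.2.2 - 1) / 2) * x ^ (p.2.1 + p.2.2) *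
      qPoch (t * q ^ (p.1 + p.2.2)) q p.2.1 * qPoch b q p.2.1 /
      (qPoch q q p.1 * qPoch q q p.2.1 * qPoch q q p.2.2 * qPoch (b * t) q p.2.1))) :
    ∑' p : ℕ × ℕ, A ((p.1 : ℤ) - (p.2 : ℤ)) * q ^ (p.1 * p.2) * x ^ p.2 *
      qPoch (b * q ^ (-(p.1 : ℤ))) q p.2 * qPoch t q p.2 /
      (qPoch q q p.1 * qPoch q q p.2 * qPoch (b * t) q p.2)
    = ∑' p : ℕ × ℕ × ℕ, A ((p.1 : ℤ) - (p.2.1 : ℤ)) * (-1 : ℂ) ^ p.2.2 *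
      q ^ (p.2.2 * (p.2.2 - 1) / 2) * x ^ (p.2.1 + p.2.2) *
      qPoch (t * q ^ (p.1 + p.2.2)) q p.2.1 * qPoch b q p.2.1 /
      (qPoch q q p.1 * qPoch q q p.2.1 * qPoch q q p.2.2 * qPoch (b * t) q p.2.1) := by
  have hbt' (n : ℕ) : b * t * q ^ n ≠ 1 := fun hn ↦
    hbt n (by rw [zpow_neg, zpow_natCast]; exact eq_inv_of_mul_eq_one_left hn)
  rw [tsum_eq_tsum_sum_range_min h]
  refine tsum_congr fun ⟨I, M⟩ ↦ ?_
  calc _ = A ((I : ℤ) - M) * x ^ M * (q ^ (I * M) * qPoch (b * q ^ (-(I : ℤ))) q M *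
          qPoch t q M / (qPoch q q I * qPoch q q M * qPoch (b * t) q M)) := by ring
    _ = _ := by
      rw [← q_pfaff_saalschutz hq0 hq hbt', Finset.mul_sum]
      refine Finset.sum_congr rfl fun k hk ↦ ?_
      have hkI : k ≤ I := by grind
      have hkM : k ≤ M := by grind
      have hsub : ((I - k : ℕ) : ℤ) - ((M - k : ℕ) : ℤ) = I - M := by omega
      simp only [hsub, Nat.sub_add_cancel hkI, Nat.sub_add_cancel hkM]
      ring

theorem stmt0 (q : ℂ) (hq0 : 0 < ‖q‖) (hq1 : ‖q‖ < 1)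
    (A : ℤ → ℂ) (b t x : ℂ)
    (hbt : ∀ m : ℕ, b * t ≠ q ^ (-(m : ℤ)))
    (h1 : Summable (fun p : ℕ × ℕ => ‖A ((p.1 : ℤ) - (p.2 : ℤ)) * q ^ (p.1 * p.2) * x ^ p.2 *
      qPoch (b * q ^ (-(p.1 : ℤ))) q p.2 * qPoch t q p.2 /
      (qPoch q q p.1 * qPoch q q p.2 * qPoch (b * t) q p.2)‖))
    (h2 : Summable (fun p : ℕ × ℕ × ℕ => ‖A ((p.1 : ℤ) - (p.2.1 : ℤ)) * (-1 : ℂ) ^ p.2.2 *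
      q ^ (p.2.2 * (p.2.2 - 1) / 2) * x ^ (p.2.1 + p.2.2) *
      qPoch (t * q ^ (p.1 + p.2.2)) q p.2.1 * qPoch b q p.2.1 /
      (qPoch q q p.1 * qPoch q q p.2.1 * qPoch q q p.2.2 * qPoch (b * t) q p.2.1)‖)) :
    ∑' p : ℕ × ℕ, A ((p.1 : ℤ) - (p.2 : ℤ)) * q ^ (p.1 * p.2) * x ^ p.2 *
      qPoch (b * q ^ (-(p.1 : ℤ))) q p.2 * qPoch t q p.2 /
      (qPoch q q p.1 * qPoch q q p.2 * qPoch (b * t) q p.2)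
    = ∑' p : ℕ × ℕ × ℕ, A ((p.1 : ℤ) - (p.2.1 : ℤ)) * (-1 : ℂ) ^ p.2.2 *
      q ^ (p.2.2 * (p.2.2 - 1) / 2) * x ^ (p.2.1 + p.2.2) *
      qPoch (t * q ^ (p.1 + p.2.2)) q p.2.1 * qPoch b q p.2.1 /
      (qPoch q q p.1 * qPoch q q p.2.1 * qPoch q q p.2.2 * qPoch (b * t) q p.2.1) :=
  stmt0_general q (norm_pos_iff.mp hq0) (pow_succ_ne_one_of_norm_lt_one hq1) A b t x hbt
    h2.of_norm
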